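/- For every pair of integers (d, r) with d ≥ 4 and d/2 ≤ r ≤ 2(d−1)/3 (i.e. 2r ≥ d and 3r ≤ 2(d−1)), there exists a line arrangement A of d lines in the real projective plane which is maximal Tjurina of type (d, r). -/

import Mathlib

open Classical MvPolynomial

variable {K : Type*} [Field K] [CharZero K] {ℓ : ℕ}

/-- A (central) hyperplane arrangement: a finite set of nonzero linear forms,
pairwise non-proportional. -/
def IsArrangement (A : Finset (MvPolynomial (Fin ℓ) K)) : Prop :=
  (∀ α ∈ A, α ≠ 0 ∧ α.IsHomogeneous 1) ∧
    ∀ α ∈ A, ∀ β ∈ A, α ≠ β → ∀ c : K, α ≠ c • β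

/-- The arrangement is essential: the common zero set of its forms is `{0}`. -/
def IsEssential (A : Finset (MvPolynomial (Fin ℓ) K)) : Prop :=
  ∀ v : Fin ℓ → K, (∀ α ∈ A, eval v α = 0) → v = 0

/-- The defining polynomial `Q(A)`. -/
noncomputable def Qpoly (A : Finset (MvPolynomial (Fin ℓ) K)) : MvPolynomial (Fin ℓ) K :=
  ∏ α ∈ A, α

/-- Apply a derivation `θ = Σ θ_j ∂_j` to a polynomial. -/
noncomputable def applyDer (θ : Fin ℓ → MvPolynomial (Fin ℓ) K)
    (f : MvPolynomial (Fin ℓ) K) : MvPolynomial (Fin ℓ) K :=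
  ∑ j, θ j * pderiv j f

/-- The minimal degree of a Jacobian relation `r(A)`. -/
noncomputable def mdr (A : Finset (MvPolynomial (Fin ℓ) K)) : ℕ :=
  sInf {r | ∃ θ : Fin ℓ → MvPolynomial (Fin ℓ) K, θ ≠ 0 ∧
    (∀ j, (θ j).IsHomogeneous r) ∧ applyDer θ (Qpoly A) = 0}

/-- The number of elements `|A^H|` of the restriction of `A` to `H`:
the number of distinct subspaces `H ∩ ker α_L`, `L ∈ A \ {H}`. -/
noncomputable def restCard (A : Finset (MvPolynomial (Fin ℓ) K))
    (H : MvPolynomial (Fin ℓ) K) : ℕ :=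
  ((A.erase H).image fun L => {v : Fin ℓ → K | eval v H = 0 ∧ eval v L = 0}).card

/-- The number `n_j(A)` of intersection points of multiplicity `j` of a line
arrangement `A` in `P^2`. An intersection point is encoded (bijectively) by the set
of lines of `A` passing through it, which has at least two elements. -/
noncomputable def nPoints (A : Finset (MvPolynomial (Fin 3) K)) (j : ℕ) : ℕ :=
  Set.ncard {T : Finset (MvPolynomial (Fin 3) K) |
    ∃ v : Fin 3 → K, v ≠ 0 ∧ T = A.filter (fun α => eval v α = 0) ∧
      2 ≤ T.card ∧ T.card = j}

/-- The maximal multiplicity `m(A)` of an intersection point of `A`. -/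
noncomputable def maxMult (A : Finset (MvPolynomial (Fin 3) K)) : ℕ :=
  sSup {j | 2 ≤ j ∧ nPoints A j ≠ 0}

/-- The global Tjurina number `τ(A) = Σ_{j ≥ 2} n_j(A)·(j−1)²` of a line arrangement. -/
noncomputable def tjurina (A : Finset (MvPolynomial (Fin 3) K)) : ℕ :=
  ∑ j ∈ Finset.range (A.card + 1), nPoints A j * (j - 1) ^ 2

/-- `τ(d,r)_max = (d−1)(d−r−1) + r² − C(2r−d+2, 2)`, for `d/2 ≤ r ≤ d−1`. -/
def tauMax (d r : ℕ) : ℕ :=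
  (d - 1) * (d - r - 1) + r ^ 2 - Nat.choose (2 * r - d + 2) 2

/-- A line arrangement `A` is maximal Tjurina of type `(d, r)` if it consists of `d`
lines, `r(A) = r` and `τ(A) = τ(d,r)_max`. -/
def IsMaxTjurina (A : Finset (MvPolynomial (Fin 3) K)) (d r : ℕ) : Prop :=
  A.card = d ∧ mdr A = r ∧ tjurina A = tauMax d r

/-!
The arrangement is the line at infinity together with three parallel classes: `n` lines `x = i`,
`n` lines `y = j` (`0 ≤ i, j < n`) and `k` lines `x + y = i` (`n ≤ i < n + k`), where
`n = d - r - 1`, `k = 2 * r + 1 - d` and hence `k ≤ n`.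

The product of the lines missing a point of multiplicity `n + 1` yields a Jacobian relation of
degree `d - (n + 1) = n + k`. A relation of smaller degree is, up to a multiple of the Euler
derivation, a polynomial vector field on the affine plane which is tangent to every line and so
vanishes where two of them cross. These crossings contain all lattice points of the triangle
`x + y < n + k`, on which a nonzero polynomial of degree less than `n + k` cannot vanish
identically, so the relation is a multiple of the Euler derivation and therefore zero.

For three parallel classes with arbitrary levels, each pair of classes meets in as many affine
points as there are pairs of lines, so the Tjurina number depends only on the sizes of the classes
and on the number of triple points, which here is `n * k - (k + 1).choose 2`.
-/

section Polynomial

variable {σ R : Type*} [CommRing R] {n e : ℕ}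

lemma isHomogeneous_of_X_mul {i : σ} {f : MvPolynomial σ R}
    (h : (X i * f).IsHomogeneous (e + 1)) : f.IsHomogeneous e := by
  intro m hm
  have hdeg := h (d := Finsupp.single i 1 + m) (by rwa [coeff_X_mul])
  simp only [map_add, Finsupp.weight_single, Pi.one_apply, smul_eq_mul, mul_one] at hdeg
  omega

lemma eval_smul_of_isHomogeneous {f : MvPolynomial σ R} (hf : f.IsHomogeneous e) (c : R)
    (v : σ → R) : eval (c • v) f = c ^ e * eval v f := by
  simp only [eval_eq, Finset.mul_sum]
  refine Finset.sum_congr rfl fun m hm => ?_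
  simp only [hf.degree_eq_sum_deg_support hm, ← Finset.prod_pow_eq_pow_sum, Pi.smul_apply,
    smul_eq_mul, mul_pow, Finset.prod_mul_distrib]
  ring

lemma eval_finSuccEquiv_one_eq_sum {f : MvPolynomial (Fin (n + 1)) R} (hf : f.IsHomogeneous e) :
    (finSuccEquiv R n f).eval 1 = ∑ i ∈ Finset.range (e + 1), (finSuccEquiv R n f).coeff i := by
  have hdeg : (finSuccEquiv R n f).natDegree < e + 1 := by
    rw [natDegree_finSuccEquiv, Nat.lt_succ_iff]
    exact (degreeOf_le_totalDegree f 0).trans hf.totalDegree_le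
  simp [Polynomial.eval_eq_sum_range' hdeg]

lemma totalDegree_eval_finSuccEquiv_one_le {f : MvPolynomial (Fin (n + 1)) R}
    (hf : f.IsHomogeneous e) : ((finSuccEquiv R n f).eval 1).totalDegree ≤ e := by
  rw [eval_finSuccEquiv_one_eq_sum hf]
  refine totalDegree_finsetSum_le fun i hi => ?_
  have hi : i + (e - i) = e := Nat.add_sub_cancel' (Finset.mem_range_succ_iff.1 hi)
  exact (hf.finSuccEquiv_coeff_isHomogeneous i _ hi).totalDegree_le.trans (Nat.sub_le e i)

lemma eq_zero_of_eval_finSuccEquiv_one_eq_zero {f : MvPolynomial (Fin (n + 1)) R}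
    (hf : f.IsHomogeneous e) (h : (finSuccEquiv R n f).eval 1 = 0) : f = 0 := by
  have hcoeff : ∀ i ∈ Finset.range (e + 1), (finSuccEquiv R n f).coeff i = 0 := by
    intro i hi
    have hcomp : ∀ j ∈ Finset.range (e + 1),
        homogeneousComponent (e - i) ((finSuccEquiv R n f).coeff j) =
          if i = j then (finSuccEquiv R n f).coeff j else 0 := by
      intro j hj
      rw [Finset.mem_range] at hi hj
      rw [homogeneousComponent_of_mem
        (hf.finSuccEquiv_coeff_isHomogeneous j (e - j) (by omega))]
      exact if_congr (by omega) rfl rfl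
    have := congrArg (homogeneousComponent (e - i)) h
    rwa [eval_finSuccEquiv_one_eq_sum hf, map_sum, Finset.sum_congr rfl hcomp,
      Finset.sum_ite_eq, if_pos hi, map_zero] at this
  refine (finSuccEquiv R n).injective ?_
  rw [map_zero]
  ext1 i
  by_cases hi : i ∈ Finset.range (e + 1)
  · simpa using hcoeff i hi
  · have hdeg := (degreeOf_le_totalDegree f 0).trans hf.totalDegree_le
    rw [← natDegree_finSuccEquiv] at hdeg
    rw [Finset.mem_range] at hi
    simpa using Polynomial.coeff_eq_zero_of_natDegree_lt (by omega)

variable [IsDomain R] [CharZero R]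

lemma eq_zero_of_eval_natCast_eq_zero [Fintype σ] {f : MvPolynomial σ R} (hf : f.totalDegree ≤ e)
    (h : ∀ m : σ → ℕ, ∑ i, m i ≤ e → eval (fun i => (m i : R)) f = 0) : f = 0 := by
  by_contra hf0
  obtain ⟨m, hm, hmdeg⟩ := Finset.exists_mem_eq_sup f.support (support_nonempty.2 hf0)
    fun m => m.degree
  have hmdeg : f.totalDegree = m.degree := hmdeg
  obtain ⟨x, hx, hfx⟩ := combinatorial_nullstellensatz_exists_eval_nonzero f m
    (mem_support_iff.1 hm) hmdeg (fun i => (Finset.range (m i + 1)).map Nat.castEmbedding)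
    (by simp)
  simp only [Finset.mem_map, Finset.mem_range_succ_iff, Nat.castEmbedding_apply] at hx
  choose t ht htx using hx
  obtain rfl : (fun i => (t i : R)) = x := funext htx
  refine hfx (h t ?_)
  calc ∑ i, t i ≤ ∑ i, m i := Finset.sum_le_sum fun i _ => ht i
    _ = f.totalDegree := by rw [hmdeg, Finsupp.degree_eq_sum]
    _ ≤ e := hf

lemma eq_zero_of_eval_cons_one_natCast_eq_zero {f : MvPolynomial (Fin (n + 1)) R}
    (hf : f.IsHomogeneous e)
    (h : ∀ m : Fin n → ℕ, ∑ i, m i ≤ e →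
      eval (Fin.cons 1 fun i => (m i : R) : Fin (n + 1) → R) f = 0) : f = 0 := by
  refine eq_zero_of_eval_finSuccEquiv_one_eq_zero hf
    (eq_zero_of_eval_natCast_eq_zero (totalDegree_eval_finSuccEquiv_one_le hf) fun m hm => ?_)
  rw [← h m hm, eval_eq_eval_mv_eval', Polynomial.eval_one_map]

end Polynomial

section Field

variable {σ F : Type*} [Field F] {α : MvPolynomial σ F}

lemma prime_of_isHomogeneous_one (hα : α.IsHomogeneous 1) (h0 : α ≠ 0) : Prime α := by
  refine (irreducible_of_totalDegree_eq_one (hα.totalDegree h0) fun c hc => ?_).prime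
  obtain ⟨m, hm⟩ := exists_coeff_ne_zero h0
  exact (ne_zero_of_dvd_ne_zero hm (hc m)).isUnit

end Field

section JacobianRelations

variable {F : Type*} [Field F] {ℓ a b : ℕ} {A : Finset (MvPolynomial (Fin ℓ) F)}
  {θ : Fin ℓ → MvPolynomial (Fin ℓ) F} {f α β : MvPolynomial (Fin ℓ) F} {v : Fin ℓ → F}

lemma applyDer_mul (θ : Fin ℓ → MvPolynomial (Fin ℓ) F) (f g : MvPolynomial (Fin ℓ) F) :
    applyDer θ (f * g) = f * applyDer θ g + g * applyDer θ f := by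
  simp only [applyDer, Derivation.leibniz, smul_eq_mul, mul_add, Finset.sum_add_distrib,
    Finset.mul_sum, mul_left_comm]

lemma applyDer_X_of_isHomogeneous (hf : f.IsHomogeneous b) : applyDer X f = b * f := by
  rw [applyDer, hf.sum_X_mul_pderiv, nsmul_eq_mul]

lemma eval_applyDer_C_of_isHomogeneous (hf : f.IsHomogeneous b) (v : Fin ℓ → F) :
    eval v (applyDer (fun j => C (v j)) f) = b * eval v f := by
  simpa [applyDer] using congrArg (eval v) (applyDer_X_of_isHomogeneous hf)

lemma isHomogeneous_applyDer (hθ : ∀ j, (θ j).IsHomogeneous a) (hf : f.IsHomogeneous b) :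
    (applyDer θ f).IsHomogeneous (a + (b - 1)) :=
  IsHomogeneous.sum _ _ _ fun j _ => (hθ j).mul hf.pderiv

lemma isHomogeneous_applyDer_mul_X (hθ : ∀ j, (θ j).IsHomogeneous a) (hf : f.IsHomogeneous b)
    (i : Fin ℓ) : (applyDer θ f * X i).IsHomogeneous (a + b) := by
  obtain rfl | hb := Nat.eq_zero_or_pos b
  · obtain ⟨c, rfl⟩ : ∃ c, f = C c :=
      ⟨_, totalDegree_eq_zero_iff_eq_C.1 (Nat.le_zero.1 hf.totalDegree_le)⟩
    simp [applyDer, isHomogeneous_zero]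
  · convert (isHomogeneous_applyDer hθ hf).mul (isHomogeneous_X F i) using 1
    omega

lemma applyDer_C_eq_C_eval (hα : α.IsHomogeneous 1) (v : Fin ℓ → F) :
    applyDer (fun j => C (v j)) α = C (eval v α) := by
  have h0 : (applyDer (fun j => C (v j)) α).IsHomogeneous 0 :=
    isHomogeneous_applyDer (fun j => isHomogeneous_C _ (v j)) hα
  obtain ⟨c, hc⟩ : ∃ c, applyDer (fun j => C (v j)) α = C c :=
    ⟨_, totalDegree_eq_zero_iff_eq_C.1 (Nat.le_zero.1 h0.totalDegree_le)⟩
  have hcv := eval_applyDer_C_of_isHomogeneous hα v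
  rw [hc, eval_C, Nat.cast_one, one_mul] at hcv
  rw [hc, hcv]

lemma isHomogeneous_prod_of_subset (hA : IsArrangement A) {B : Finset (MvPolynomial (Fin ℓ) F)}
    (hB : B ⊆ A) : (∏ α ∈ B, α).IsHomogeneous B.card := by
  simpa using IsHomogeneous.prod B id (fun _ => 1) fun α hα => (hA.1 α (hB hα)).2

lemma Qpoly_ne_zero (hA : IsArrangement A) : Qpoly A ≠ 0 :=
  Finset.prod_ne_zero_iff.2 fun α hα => (hA.1 α hα).1

lemma applyDer_X_Qpoly (hA : IsArrangement A) : applyDer X (Qpoly A) = A.card * Qpoly A :=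
  applyDer_X_of_isHomogeneous (isHomogeneous_prod_of_subset hA subset_rfl)

lemma eq_of_dvd_of_mem (hA : IsArrangement A) (hα : α ∈ A) (hβ : β ∈ A) (h : α ∣ β) : β = α := by
  obtain ⟨hα0, hα1⟩ := hA.1 α hα
  obtain ⟨hβ0, hβ1⟩ := hA.1 β hβ
  obtain ⟨q, rfl⟩ := h
  have hq : q.totalDegree = 0 := by
    have := hβ1.totalDegree hβ0
    rw [totalDegree_mul_of_isDomain hα0 (right_ne_zero_of_mul hβ0), hα1.totalDegree hα0] at this
    omega
  by_contra hne
  refine hA.2 _ hβ α hα hne (coeff 0 q) ?_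
  rw [smul_eq_C_mul, ← totalDegree_eq_zero_iff_eq_C.1 hq, mul_comm]

lemma dvd_applyDer_of_dvd_applyDer_Qpoly (hA : IsArrangement A) (hα : α ∈ A)
    (h : Qpoly A ∣ applyDer θ (Qpoly A)) : α ∣ applyDer θ α := by
  have hprime := prime_of_isHomogeneous_one (hA.1 α hα).2 (hA.1 α hα).1
  have hQ : Qpoly A = α * ∏ β ∈ A.erase α, β := (Finset.mul_prod_erase A id hα).symm
  rw [hQ, applyDer_mul] at h
  have hmul := (dvd_add_right (dvd_mul_right α _)).1 ((dvd_mul_right α _).trans h)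
  refine (hprime.dvd_or_dvd hmul).resolve_left fun hdvd => ?_
  obtain ⟨β, hβ, hαβ⟩ := (hprime.dvd_finsetProd_iff _).1 hdvd
  obtain ⟨hne, hβA⟩ := Finset.mem_erase.1 hβ
  exact hne (eq_of_dvd_of_mem hA hα hβA hαβ)

lemma eval_applyDer_eq_zero (hA : IsArrangement A) (hα : α ∈ A)
    (h : Qpoly A ∣ applyDer θ (Qpoly A)) (hv : eval v α = 0) : eval v (applyDer θ α) = 0 :=
  zero_dvd_iff.1 (hv ▸ map_dvd (eval v) (dvd_applyDer_of_dvd_applyDer_Qpoly hA hα h))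

lemma eq_zero_of_applyDer_mul_X_eq_zero [CharZero F] (hA : IsArrangement A) (hne : A.Nonempty)
    {g : MvPolynomial (Fin ℓ) F} (h : applyDer (fun j => g * X j) (Qpoly A) = 0) : g = 0 := by
  have hg : g * (A.card * Qpoly A) = 0 := by
    rw [← applyDer_X_Qpoly hA, ← h]
    simp only [applyDer, Finset.mul_sum, mul_assoc]
  have hcard : (A.card : MvPolynomial (Fin ℓ) F) ≠ 0 := Nat.cast_ne_zero.2 hne.card_ne_zero
  exact (mul_eq_zero.1 hg).resolve_right (mul_ne_zero hcard (Qpoly_ne_zero hA))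

/-- The hyperplanes of `A` through `v`. For `v ≠ 0` in dimension three this is the pencil of lines
of `A` through the point `[v]`, and its cardinality is the multiplicity of that point. -/
noncomputable def formsThrough (A : Finset (MvPolynomial (Fin ℓ) F)) (v : Fin ℓ → F) :
    Finset (MvPolynomial (Fin ℓ) F) :=
  A.filter fun α => eval v α = 0

lemma formsThrough_smul (hA : IsArrangement A) {c : F} (hc : c ≠ 0) (v : Fin ℓ → F) :
    formsThrough A (c • v) = formsThrough A v :=
  Finset.filter_congr fun α hα => by
    rw [eval_smul_of_isHomogeneous (hA.1 α hα).2, pow_one, mul_eq_zero, or_iff_right hc]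

lemma applyDer_C_prod_formsThrough (hA : IsArrangement A) (v : Fin ℓ → F) :
    applyDer (fun j => C (v j)) (∏ α ∈ formsThrough A v, α) = 0 := by
  refine Finset.prod_induction _ (fun f => applyDer (fun j => C (v j)) f = 0) ?_ ?_ ?_
  · intro f g hf hg
    rw [applyDer_mul, hf, hg, mul_zero, mul_zero, add_zero]
  · simp [applyDer]
  · intro α hα
    obtain ⟨hαA, hαv⟩ := Finset.mem_filter.1 hα
    rw [applyDer_C_eq_C_eval (hA.1 α hαA).2, hαv, map_zero]

-- With `P` the product of the forms not vanishing at `v` and `E` the Euler derivation, the relation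
-- is `#A P ∂_v - (∂_v P) E`. Its value at `v` is `m P(v) v`, where `m` counts the forms vanishing
-- at `v`; hence it is nonzero.
lemma exists_jacobianRelation_of_formsThrough_nonempty [CharZero F] (hA : IsArrangement A)
    (hv : v ≠ 0) (hm : (formsThrough A v).Nonempty) :
    ∃ θ : Fin ℓ → MvPolynomial (Fin ℓ) F, θ ≠ 0 ∧
      (∀ j, (θ j).IsHomogeneous (A.card - (formsThrough A v).card)) ∧
      applyDer θ (Qpoly A) = 0 := by
  set P := ∏ α ∈ A.filter (fun α => ¬ eval v α = 0), α with hP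
  set R := ∏ α ∈ formsThrough A v, α
  set D := applyDer fun j => C (v j) with hD
  have hQ : Qpoly A = R * P := (Finset.prod_filter_mul_prod_filter_not A _ _).symm
  have hcard : (formsThrough A v).card + (A.filter fun α => ¬ eval v α = 0).card = A.card :=
    Finset.card_filter_add_card_filter_not _
  have hPhom : P.IsHomogeneous (A.card - (formsThrough A v).card) := by
    rw [← hcard, Nat.add_sub_cancel_left]
    exact isHomogeneous_prod_of_subset hA (Finset.filter_subset _ _)
  have hPv : eval v P ≠ 0 := by
    rw [hP, map_prod]
    exact Finset.prod_ne_zero_iff.2 fun α hα => (Finset.mem_filter.1 hα).2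
  have hDP : eval v (D P) = (A.card - (formsThrough A v).card : ℕ) * eval v P :=
    eval_applyDer_C_of_isHomogeneous hPhom v
  refine ⟨fun j => C (A.card * v j) * P - D P * X j, fun hθ => ?_, fun j => ?_, ?_⟩
  · obtain ⟨j, hj⟩ := Function.ne_iff.1 hv
    have hθv := congrArg (eval v) (congrFun hθ j)
    have hprod : ((formsThrough A v).card : F) * (eval v P * v j) = 0 := by
      rw [← hcard, Nat.add_sub_cancel_left] at hDP
      simp only [map_sub, map_mul, eval_C, eval_X, hDP, Pi.zero_apply, map_zero, ← hcard,
        Nat.cast_add] at hθv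
      linear_combination hθv
    exact mul_ne_zero (Nat.cast_ne_zero.2 hm.card_ne_zero) (mul_ne_zero hPv hj) hprod
  · refine (hPhom.C_mul _).sub ?_
    simpa using isHomogeneous_applyDer_mul_X (fun j => isHomogeneous_C _ (v j)) hPhom j
  · have hexpand : applyDer (fun j => C (A.card * v j) * P - D P * X j) (Qpoly A) =
        A.card * P * D (Qpoly A) - D P * applyDer X (Qpoly A) := by
      simp only [hD, applyDer, Finset.mul_sum, ← Finset.sum_sub_distrib, map_mul, map_natCast]
      exact Finset.sum_congr rfl fun j _ => by ring
    have hDQ : D (Qpoly A) = R * D P := by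
      rw [hQ, hD, applyDer_mul, applyDer_C_prod_formsThrough hA, mul_zero, add_zero]
    rw [hexpand, applyDer_X_Qpoly hA, hDQ, hQ]
    ring

end JacobianRelations

section Tjurina

variable {F : Type*} [Field F]

/-- The points of multiplicity at least two of a line arrangement, each encoded by the pencil of
lines through it. -/
noncomputable def multiplePoints (A : Finset (MvPolynomial (Fin 3) F)) :
    Finset (Finset (MvPolynomial (Fin 3) F)) :=
  A.powerset.filter fun T => 2 ≤ T.card ∧ ∃ v : Fin 3 → F, v ≠ 0 ∧ T = formsThrough A v

lemma nPoints_eq_card (A : Finset (MvPolynomial (Fin 3) F)) (j : ℕ) :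
    nPoints A j = ((multiplePoints A).filter fun T => T.card = j).card := by
  rw [nPoints, ← Set.ncard_coe_finset]
  congr 1
  ext T
  rw [Set.mem_ofPred_eq, Finset.mem_coe, Finset.mem_filter, multiplePoints, Finset.mem_filter,
    Finset.mem_powerset]
  constructor
  · rintro ⟨v, hv, rfl, hT, hj⟩
    exact ⟨⟨Finset.filter_subset _ _, hT, v, hv, rfl⟩, hj⟩
  · rintro ⟨⟨-, hT, v, hv, hTv⟩, hj⟩
    exact ⟨v, hv, hTv, hT, hj⟩

lemma tjurina_eq_sum_multiplePoints (A : Finset (MvPolynomial (Fin 3) F)) :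
    tjurina A = ∑ T ∈ multiplePoints A, (T.card - 1) ^ 2 := by
  have hmaps : ∀ T ∈ multiplePoints A, T.card ∈ Finset.range (A.card + 1) := fun T hT =>
    Finset.mem_range_succ_iff.2
      (Finset.card_le_card (Finset.mem_powerset.1 (Finset.mem_filter.1 hT).1))
  rw [tjurina, ← Finset.sum_fiberwise_of_maps_to hmaps]
  refine Finset.sum_congr rfl fun j _ => ?_
  rw [Finset.sum_congr rfl fun T hT => by rw [(Finset.mem_filter.1 hT).2], Finset.sum_const,
    smul_eq_mul, nPoints_eq_card]

lemma tjurina_eq_sum {A : Finset (MvPolynomial (Fin 3) F)} {J : Type*} {P : Finset J}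
    {p : J → Fin 3 → F} (hp0 : ∀ a ∈ P, p a ≠ 0)
    (hinj : ∀ a ∈ P, ∀ b ∈ P, 2 ≤ (formsThrough A (p a)).card →
      formsThrough A (p a) = formsThrough A (p b) → a = b)
    (hsurj : ∀ v ≠ 0, 2 ≤ (formsThrough A v).card →
      ∃ a ∈ P, formsThrough A (p a) = formsThrough A v) :
    tjurina A = ∑ a ∈ P, ((formsThrough A (p a)).card - 1) ^ 2 := by
  set P₂ := P.filter fun a => 2 ≤ (formsThrough A (p a)).card with hP₂
  have himage : multiplePoints A = P₂.image fun a => formsThrough A (p a) := by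
    ext T
    simp only [multiplePoints, hP₂, Finset.mem_filter, Finset.mem_powerset, Finset.mem_image]
    constructor
    · rintro ⟨-, hT, v, hv, rfl⟩
      obtain ⟨a, ha, hav⟩ := hsurj v hv hT
      exact ⟨a, ⟨ha, hav ▸ hT⟩, hav⟩
    · rintro ⟨a, ⟨ha, hT⟩, rfl⟩
      exact ⟨Finset.filter_subset _ _, hT, p a, hp0 a ha, rfl⟩
  have hinjOn : Set.InjOn (fun a => formsThrough A (p a)) P₂ := fun a ha b hb =>
    hinj a (Finset.mem_filter.1 ha).1 b (Finset.mem_filter.1 hb).1 (Finset.mem_filter.1 ha).2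
  rw [tjurina_eq_sum_multiplePoints, himage, Finset.sum_image hinjOn]
  refine Finset.sum_subset (Finset.filter_subset _ _) fun a ha ha₂ => ?_
  have hle : (formsThrough A (p a)).card ≤ 1 := by
    rw [hP₂, Finset.mem_filter, not_and, not_le] at ha₂
    exact Nat.lt_succ_iff.1 (ha₂ ha)
  rw [Nat.sub_eq_zero_of_le hle, zero_pow two_ne_zero]

end Tjurina

section Height

variable {R : Type*} [CommRing R] {d e : Fin 3} {p q : R × R}

/-- The linear function on the plane whose level lines form the `d`-th parallel class:
the two coordinates and their sum. -/
def height (d : Fin 3) : R × R →ₗ[R] R :=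
  ![LinearMap.fst R R R, LinearMap.snd R R R, LinearMap.fst R R R + LinearMap.snd R R R] d

/-- A vector spanning the kernel of `height d`, i.e. the point at infinity of the `d`-th
parallel class. -/
def direction (R : Type*) [CommRing R] (d : Fin 3) : R × R :=
  ![(0, 1), (1, 0), (1, -1)] d

lemma height_direction_eq_zero_iff [Nontrivial R] : height e (direction R d) = 0 ↔ e = d := by
  fin_cases d <;> fin_cases e <;> simp [height, direction]

lemma direction_ne_zero [Nontrivial R] (d : Fin 3) : direction R d ≠ 0 := by
  fin_cases d <;> simp [direction]

lemma exists_eq_smul_direction (h : height d p = 0) : ∃ c : R, p = c • direction R d := by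
  obtain ⟨x, y⟩ := p
  fin_cases d
  · exact ⟨y, by simpa [height, direction] using h⟩
  · exact ⟨x, by simpa [height, direction] using h⟩
  · exact ⟨x, by simpa [height, direction] using eq_neg_of_add_eq_zero_right h⟩

lemma bijective_height_prodMk (h : d ≠ e) :
    Function.Bijective fun p : R × R => (height d p, height e p) := by
  constructor
  · rintro ⟨x, y⟩ ⟨x', y'⟩ hxy
    fin_cases d <;> fin_cases e <;> simp_all [height] <;> grind
  · rintro ⟨a, b⟩
    fin_cases d <;> fin_cases e <;> try exact absurd rfl h
    exacts [⟨(a, b), rfl⟩, ⟨(a, b - a), by simp [height]⟩, ⟨(b, a), rfl⟩,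
      ⟨(b - a, a), by simp [height]⟩, ⟨(b, a - b), by simp [height]⟩,
      ⟨(a - b, b), by simp [height]⟩]

lemma map_height {R' : Type*} [CommRing R'] (φ : R →+* R') (d : Fin 3) (p : R × R) :
    φ (height d p) = height d (φ p.1, φ p.2) := by
  fin_cases d <;> simp [height]

end Height

section ParallelClasses

variable {F : Type*} [Field F] {d e : Fin 3} {b c t : F} {p q : F × F} {S : Fin 3 → Finset F}

/-- Homogeneous coordinates of points of the projective plane: the affine point `p` for `t = 1`,
the point at infinity in direction `p` for `t = 0`. -/
def planePoint (t : F) (p : F × F) : Fin 3 → F :=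
  ![t, p.1, p.2]

/-- The homogenised equation of the affine line `height d = c`, the line at infinity being
`X 0 = 0`. -/
noncomputable def levelLine (d : Fin 3) (c : F) : MvPolynomial (Fin 3) F :=
  height d (X 1, X 2) - C c * X 0

lemma eval_X_zero_planePoint : eval (planePoint t p) (X 0) = t := by
  simp [planePoint]

lemma eval_levelLine_planePoint :
    eval (planePoint t p) (levelLine d c) = height d p - c * t := by
  simp [levelLine, map_height, planePoint]

lemma exists_height_eq (d : Fin 3) (c : F) : ∃ p, height d p = c := by
  fin_cases d
  exacts [⟨(c, 0), rfl⟩, ⟨(0, c), rfl⟩, ⟨(c, 0), add_zero c⟩]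

lemma isHomogeneous_levelLine (d : Fin 3) (c : F) : (levelLine d c).IsHomogeneous 1 := by
  refine IsHomogeneous.sub ?_ ((isHomogeneous_X F 0).C_mul c)
  fin_cases d
  exacts [isHomogeneous_X F 1, isHomogeneous_X F 2, (isHomogeneous_X F 1).add (isHomogeneous_X F 2)]

lemma levelLine_ne_smul_X_zero : levelLine d c ≠ b • X 0 := by
  obtain ⟨e, he⟩ := exists_ne d
  intro h
  have := congrArg (eval (planePoint 0 (direction F e))) h
  rw [eval_levelLine_planePoint, smul_eval, eval_X_zero_planePoint, mul_zero, mul_zero,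
    sub_zero, height_direction_eq_zero_iff] at this
  exact he this.symm

lemma X_zero_ne_smul_levelLine : X 0 ≠ b • levelLine d c := by
  obtain ⟨p, hp⟩ := exists_height_eq d c
  intro h
  have := congrArg (eval (planePoint 1 p)) h
  rw [smul_eval, eval_levelLine_planePoint, eval_X_zero_planePoint, hp, mul_one, sub_self,
    mul_zero] at this
  exact one_ne_zero this

lemma eq_of_levelLine_eq_smul_levelLine {c' : F} (h : levelLine d c = b • levelLine e c') :
    d = e ∧ c = c' := by
  have hde : d = e := by
    have := congrArg (eval (planePoint 0 (direction F e))) h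
    simpa [eval_levelLine_planePoint, height_direction_eq_zero_iff.2,
      height_direction_eq_zero_iff] using this
  subst hde
  obtain ⟨p, hp⟩ := exists_height_eq d c'
  have := congrArg (eval (planePoint 1 p)) h
  rw [smul_eval, eval_levelLine_planePoint, eval_levelLine_planePoint, hp, mul_one, mul_one,
    sub_self, mul_zero, sub_eq_zero] at this
  exact ⟨rfl, this.symm⟩

/-- The arrangement of the lines `height d = c` with `c ∈ S d`, together with the line at
infinity. -/
noncomputable def parallelClasses (S : Fin 3 → Finset F) : Finset (MvPolynomial (Fin 3) F) :=
  insert (X 0) ((Finset.univ.sigma S).image fun l => levelLine l.1 l.2)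

lemma X_zero_mem_parallelClasses (S : Fin 3 → Finset F) : X 0 ∈ parallelClasses S :=
  Finset.mem_insert_self _ _

lemma mem_parallelClasses {α : MvPolynomial (Fin 3) F} :
    α ∈ parallelClasses S ↔ α = X 0 ∨ ∃ d, ∃ c ∈ S d, levelLine d c = α := by
  simp [parallelClasses]

lemma levelLine_mem_parallelClasses : levelLine d c ∈ parallelClasses S ↔ c ∈ S d := by
  refine ⟨fun h => ?_, fun h => mem_parallelClasses.2 (.inr ⟨d, c, h, rfl⟩)⟩
  obtain h | ⟨e, c', hc', h⟩ := mem_parallelClasses.1 h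
  · exact absurd (h.trans (one_smul F _).symm) levelLine_ne_smul_X_zero
  · obtain ⟨rfl, rfl⟩ := eq_of_levelLine_eq_smul_levelLine (h.trans (one_smul F _).symm)
    exact hc'

lemma isArrangement_parallelClasses (S : Fin 3 → Finset F) :
    IsArrangement (parallelClasses S) := by
  refine ⟨fun α hα => ?_, fun α hα β hβ hαβ b h => ?_⟩
  · obtain rfl | ⟨d, c, -, rfl⟩ := mem_parallelClasses.1 hα
    · exact ⟨X_ne_zero 0, isHomogeneous_X F 0⟩
    · refine ⟨fun h => ?_, isHomogeneous_levelLine d c⟩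
      exact levelLine_ne_smul_X_zero (h.trans (zero_smul F _).symm)
  · obtain rfl | ⟨d, c, -, rfl⟩ := mem_parallelClasses.1 hα <;>
      obtain rfl | ⟨e, c', -, rfl⟩ := mem_parallelClasses.1 hβ
    · exact hαβ rfl
    · exact X_zero_ne_smul_levelLine h
    · exact levelLine_ne_smul_X_zero h
    · obtain ⟨rfl, rfl⟩ := eq_of_levelLine_eq_smul_levelLine h
      exact hαβ rfl

lemma isEssential_parallelClasses (hde : d ≠ e) (hd : (S d).Nonempty) (he : (S e).Nonempty) :
    IsEssential (parallelClasses S) := by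
  intro v hv
  have hv0 : v 0 = 0 := by simpa using hv _ (X_zero_mem_parallelClasses S)
  have hheight : ∀ {d}, (S d).Nonempty → height d (v 1, v 2) = 0 := by
    rintro d ⟨c, hc⟩
    simpa [levelLine, map_height, hv0] using hv _ (levelLine_mem_parallelClasses.2 hc)
  have hzero : (v 1, v 2) = (0 : F × F) := by
    refine (bijective_height_prodMk hde).injective ?_
    simp only [hheight hd, hheight he, map_zero]
  ext i
  fin_cases i
  exacts [hv0, congrArg Prod.fst hzero, congrArg Prod.snd hzero]

lemma sum_parallelClasses {M : Type*} [AddCommMonoid M] (S : Fin 3 → Finset F)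
    (w : MvPolynomial (Fin 3) F → M) :
    ∑ α ∈ parallelClasses S, w α = w (X 0) + ∑ d, ∑ c ∈ S d, w (levelLine d c) := by
  have hinj : Function.Injective fun l : Σ _ : Fin 3, F => levelLine l.1 l.2 := by
    rintro ⟨d, c⟩ ⟨e, c'⟩ h
    obtain ⟨rfl, rfl⟩ := eq_of_levelLine_eq_smul_levelLine (h.trans (one_smul F _).symm)
    rfl
  have hX : X 0 ∉ (Finset.univ.sigma S).image fun l => levelLine l.1 l.2 := by
    simp only [Finset.mem_image, not_exists, not_and]
    exact fun l _ h => levelLine_ne_smul_X_zero (h.trans (one_smul F _).symm)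
  rw [parallelClasses, Finset.sum_insert hX, Finset.sum_image hinj.injOn, Finset.sum_sigma]

lemma card_parallelClasses (S : Fin 3 → Finset F) :
    (parallelClasses S).card = 1 + ∑ d, (S d).card := by
  simp only [Finset.card_eq_sum_ones, sum_parallelClasses]

lemma card_formsThrough_parallelClasses :
    (formsThrough (parallelClasses S) (planePoint t p)).card =
      (if t = 0 then 1 else 0) + ∑ d, ((S d).filter fun c => height d p = c * t).card := by
  simp only [formsThrough, Finset.card_filter, sum_parallelClasses, eval_X_zero_planePoint,
    eval_levelLine_planePoint, sub_eq_zero]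

lemma card_formsThrough_direction (d : Fin 3) :
    (formsThrough (parallelClasses S) (planePoint 0 (direction F d))).card =
      (S d).card + 1 := by
  simp only [card_formsThrough_parallelClasses, if_true, mul_zero, height_direction_eq_zero_iff,
    Finset.filter_const, apply_ite Finset.card, Finset.card_empty, Finset.sum_ite_eq',
    Finset.mem_univ, add_comm]

/-- The classes containing a line through the affine point `p`. -/
noncomputable def classesThrough (S : Fin 3 → Finset F) (p : F × F) : Finset (Fin 3) :=
  Finset.univ.filter fun d => height d p ∈ S d

lemma mem_classesThrough : d ∈ classesThrough S p ↔ height d p ∈ S d := by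
  simp [classesThrough]

lemma card_formsThrough_planePoint_one :
    (formsThrough (parallelClasses S) (planePoint 1 p)).card = (classesThrough S p).card := by
  simp only [card_formsThrough_parallelClasses, one_ne_zero, if_false, mul_one, zero_add,
    Finset.filter_eq, apply_ite Finset.card, Finset.card_singleton, Finset.card_empty,
    classesThrough, Finset.card_filter]

lemma X_zero_mem_formsThrough :
    X 0 ∈ formsThrough (parallelClasses S) (planePoint t p) ↔ t = 0 := by
  rw [formsThrough, Finset.mem_filter, eval_X_zero_planePoint,
    and_iff_right (X_zero_mem_parallelClasses S)]

lemma levelLine_mem_formsThrough :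
    levelLine d c ∈ formsThrough (parallelClasses S) (planePoint t p) ↔
      c ∈ S d ∧ height d p = c * t := by
  rw [formsThrough, Finset.mem_filter, levelLine_mem_parallelClasses, eval_levelLine_planePoint,
    sub_eq_zero]

/-- The affine intersection points of lines of the two distinct classes `d` and `e`. -/
noncomputable def crossings (S : Fin 3 → Finset F) (h : d ≠ e) : Finset (F × F) :=
  (S d ×ˢ S e).preimage (fun p => (height d p, height e p))
    (bijective_height_prodMk h).injective.injOn

lemma mem_crossings {h : d ≠ e} : p ∈ crossings S h ↔ height d p ∈ S d ∧ height e p ∈ S e := by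
  rw [crossings, Finset.mem_preimage, Finset.mem_product]

lemma card_crossings (h : d ≠ e) : (crossings S h).card = (S d).card * (S e).card := by
  rw [crossings, Finset.card_preimage, Finset.filter_true_of_mem, Finset.card_product]
  exact fun q _ => (bijective_height_prodMk h).surjective q

/-- The affine points of multiplicity at least two of `parallelClasses S`. -/
noncomputable def affineMultiplePoints (S : Fin 3 → Finset F) : Finset (F × F) :=
  Finset.univ.biUnion fun de : {de : Fin 3 × Fin 3 // de.1 ≠ de.2} => crossings S de.2

lemma mem_affineMultiplePoints : p ∈ affineMultiplePoints S ↔ 2 ≤ (classesThrough S p).card := by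
  simp only [affineMultiplePoints, Finset.mem_biUnion, Finset.mem_univ, true_and, Subtype.exists,
    Prod.exists, mem_crossings, ← mem_classesThrough, exists_prop, Nat.succ_le_iff,
    Finset.one_lt_card]
  tauto

lemma crossings_subset_affineMultiplePoints (h : d ≠ e) :
    crossings S h ⊆ affineMultiplePoints S := fun _ hp =>
  Finset.mem_biUnion.2 ⟨⟨(d, e), h⟩, Finset.mem_univ _, hp⟩

/-- Homogeneous coordinates for the candidates for multiple points of `parallelClasses S`: `inl d`
is the point at infinity of the `d`-th class, `inr p` the affine point `p`. -/
def multiplePointCoords : Fin 3 ⊕ F × F → Fin 3 → F :=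
  Sum.elim (fun d => planePoint 0 (direction F d)) (planePoint 1)

lemma multiplePointCoords_ne_zero (a : Fin 3 ⊕ F × F) : multiplePointCoords a ≠ 0 := by
  rcases a with d | p <;> intro h
  · exact direction_ne_zero (R := F) d (Prod.ext (congrFun h 1) (congrFun h 2))
  · exact one_ne_zero (congrFun h 0)

lemma eq_of_formsThrough_direction_eq
    (hd : 2 ≤ (formsThrough (parallelClasses S) (planePoint 0 (direction F d))).card)
    (h : formsThrough (parallelClasses S) (planePoint 0 (direction F d)) =
      formsThrough (parallelClasses S) (planePoint 0 (direction F e))) : d = e := by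
  rw [card_formsThrough_direction] at hd
  obtain ⟨c, hc⟩ := Finset.card_pos.1 (Nat.le_of_lt_succ hd)
  have hmem : levelLine d c ∈ formsThrough (parallelClasses S) (planePoint 0 (direction F d)) :=
    levelLine_mem_formsThrough.2 ⟨hc, by rw [mul_zero, height_direction_eq_zero_iff]⟩
  rw [h, levelLine_mem_formsThrough, mul_zero, height_direction_eq_zero_iff] at hmem
  exact hmem.2

lemma eq_of_formsThrough_planePoint_one_eq (hp : 2 ≤ (classesThrough S p).card)
    (h : formsThrough (parallelClasses S) (planePoint 1 p) =
      formsThrough (parallelClasses S) (planePoint 1 q)) : p = q := by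
  have hheight : ∀ d ∈ classesThrough S p, height d p = height d q := by
    intro d hd
    have hmem : levelLine d (height d p) ∈ formsThrough (parallelClasses S) (planePoint 1 p) :=
      levelLine_mem_formsThrough.2 ⟨mem_classesThrough.1 hd, (mul_one _).symm⟩
    rw [h, levelLine_mem_formsThrough, mul_one] at hmem
    exact hmem.2.symm
  obtain ⟨d, hd, e, he, hde⟩ := Finset.one_lt_card.1 hp
  exact (bijective_height_prodMk hde).injective (Prod.ext (hheight d hd) (hheight e he))

lemma eq_of_formsThrough_multiplePointCoords_eq (a b : Fin 3 ⊕ F × F)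
    (ha : 2 ≤ (formsThrough (parallelClasses S) (multiplePointCoords a)).card)
    (h : formsThrough (parallelClasses S) (multiplePointCoords a) =
      formsThrough (parallelClasses S) (multiplePointCoords b)) : a = b := by
  have hX : X 0 ∈ formsThrough (parallelClasses S) (multiplePointCoords a) ↔
      X 0 ∈ formsThrough (parallelClasses S) (multiplePointCoords b) := by rw [h]
  rcases a with d | p <;> rcases b with e | q <;>
    simp only [multiplePointCoords, Sum.elim_inl, Sum.elim_inr, X_zero_mem_formsThrough,
      one_ne_zero, iff_false, not_true, false_iff] at hX ha h
  · rw [eq_of_formsThrough_direction_eq ha h]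
  · rw [card_formsThrough_planePoint_one] at ha
    rw [eq_of_formsThrough_planePoint_one_eq ha h]

lemma exists_multiplePointCoords {v : Fin 3 → F} (hv : v ≠ 0)
    (h : 2 ≤ (formsThrough (parallelClasses S) v).card) :
    ∃ a ∈ Finset.univ.disjSum (affineMultiplePoints S),
      formsThrough (parallelClasses S) (multiplePointCoords a) =
        formsThrough (parallelClasses S) v := by
  obtain ⟨t, p, rfl⟩ : ∃ t p, v = planePoint t p :=
    ⟨v 0, (v 1, v 2), by ext i; fin_cases i <;> rfl⟩
  obtain rfl | ht := eq_or_ne t 0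
  · obtain ⟨α, hα, hαX⟩ := Finset.exists_mem_ne h (X 0)
    obtain rfl | ⟨d, c, -, rfl⟩ := mem_parallelClasses.1 (Finset.mem_filter.1 hα).1
    · exact absurd rfl hαX
    rw [levelLine_mem_formsThrough, mul_zero] at hα
    obtain ⟨b, rfl⟩ := exists_eq_smul_direction hα.2
    have hsmul : planePoint 0 (b • direction F d) = b • planePoint 0 (direction F d) := by
      simp [planePoint]
    have hb : b ≠ 0 := fun hb => hv (by rw [hsmul, hb, zero_smul])
    refine ⟨.inl d, by simp, ?_⟩
    rw [hsmul, formsThrough_smul (isArrangement_parallelClasses S) hb]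
    rfl
  · have hsmul : planePoint t p = t • planePoint 1 (t⁻¹ • p) := by
      simp [planePoint, ht]
    rw [hsmul, formsThrough_smul (isArrangement_parallelClasses S) ht] at h ⊢
    rw [card_formsThrough_planePoint_one, ← mem_affineMultiplePoints] at h
    exact ⟨.inr (t⁻¹ • p), Finset.inr_mem_disjSum.2 h, rfl⟩

-- For `m ≤ 3` one has `(m - 1) ^ 2 = m.choose 2 + m.choose 3`, so a point on `m` classes is
-- counted once for each pair and once for each triple of classes through it.
lemma sq_card_classesThrough_sub_one (S : Fin 3 → Finset F) (p : F × F) :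
    ((classesThrough S p).card - 1) ^ 2 =
      (if p ∈ crossings S (zero_ne_one' (Fin 3)) then 1 else 0) +
      (if p ∈ crossings S (show (0 : Fin 3) ≠ 2 by decide) then 1 else 0) +
      (if p ∈ crossings S (show (1 : Fin 3) ≠ 2 by decide) then 1 else 0) +
      if p ∈ (crossings S (zero_ne_one' (Fin 3))).filter fun q => height 2 q ∈ S 2
        then 1 else 0 := by
  simp only [classesThrough, Finset.card_filter, Fin.sum_univ_three, mem_crossings,
    Finset.mem_filter]
  by_cases h0 : height 0 p ∈ S 0 <;> by_cases h1 : height 1 p ∈ S 1 <;>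
    by_cases h2 : height 2 p ∈ S 2 <;> simp [h0, h1, h2]

lemma sum_sq_card_classesThrough_sub_one (S : Fin 3 → Finset F) :
    ∑ p ∈ affineMultiplePoints S, ((classesThrough S p).card - 1) ^ 2 =
      (S 0).card * (S 1).card + (S 0).card * (S 2).card + (S 1).card * (S 2).card +
        ((S 0 ×ˢ S 1).filter fun q => q.1 + q.2 ∈ S 2).card := by
  have hindicator : ∀ {C : Finset (F × F)}, C ⊆ affineMultiplePoints S →
      ∑ p ∈ affineMultiplePoints S, (if p ∈ C then 1 else 0) = C.card := fun hC => by
    rw [← Finset.card_filter, Finset.filter_mem_eq_inter, Finset.inter_eq_right.2 hC]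
  have hcross : ∀ {d e : Fin 3} (h : d ≠ e), crossings S h ⊆ affineMultiplePoints S :=
    crossings_subset_affineMultiplePoints
  have hprod : crossings S (zero_ne_one' (Fin 3)) = S 0 ×ˢ S 1 :=
    Finset.ext fun p => mem_crossings.trans Finset.mem_product.symm
  simp only [sq_card_classesThrough_sub_one, Finset.sum_add_distrib, hindicator (hcross _),
    hindicator ((Finset.filter_subset _ _).trans (hcross _)), card_crossings]
  rw [hprod]
  rfl

theorem tjurina_parallelClasses (S : Fin 3 → Finset F) :
    tjurina (parallelClasses S) = ∑ d, (S d).card ^ 2 +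
      ((S 0).card * (S 1).card + (S 0).card * (S 2).card + (S 1).card * (S 2).card +
        ((S 0 ×ˢ S 1).filter fun q => q.1 + q.2 ∈ S 2).card) := by
  rw [tjurina_eq_sum (fun a _ => multiplePointCoords_ne_zero a)
    (fun a _ b _ => eq_of_formsThrough_multiplePointCoords_eq a b)
    (fun _ hv h => exists_multiplePointCoords hv h), Finset.sum_disjSum]
  simp only [multiplePointCoords, Sum.elim_inl, Sum.elim_inr, card_formsThrough_direction,
    card_formsThrough_planePoint_one, Nat.add_sub_cancel, sum_sq_card_classesThrough_sub_one]

lemma exists_eq_mul_X_add_of_applyDer_Qpoly_eq_zero {θ : Fin 3 → MvPolynomial (Fin 3) F} {m : ℕ}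
    (hθ : ∀ j, (θ j).IsHomogeneous m) (h : applyDer θ (Qpoly (parallelClasses S)) = 0) :
    ∃ g η₁ η₂ : MvPolynomial (Fin 3) F, η₁.IsHomogeneous m ∧ η₂.IsHomogeneous m ∧
      θ = (fun j => g * X j) + ![0, η₁, η₂] := by
  obtain ⟨g, hg⟩ : X 0 ∣ θ 0 := by
    simpa [applyDer, pderiv_X, Pi.single_apply] using dvd_applyDer_of_dvd_applyDer_Qpoly
      (isArrangement_parallelClasses S) (X_zero_mem_parallelClasses S) (h ▸ dvd_zero _)
  have hhom : ∀ i, (θ i - g * X i).IsHomogeneous m := fun i => by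
    refine isHomogeneous_of_X_mul (i := 0) ?_
    convert ((hθ i).mul (isHomogeneous_X F 0)).sub ((hθ 0).mul (isHomogeneous_X F i)) using 1
    rw [hg]
    ring
  refine ⟨g, θ 1 - g * X 1, θ 2 - g * X 2, hhom 1, hhom 2, ?_⟩
  ext1 j
  fin_cases j <;> simp [hg, mul_comm]

lemma applyDer_levelLine (θ : Fin 3 → MvPolynomial (Fin 3) F) (d : Fin 3) (c : F) :
    applyDer θ (levelLine d c) = height d (θ 1, θ 2) - C c * θ 0 := by
  fin_cases d <;> simp [applyDer, levelLine, height, Fin.sum_univ_three, pderiv_X,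
    Pi.single_apply] <;> ring

-- Modulo the Euler derivation, the relation is the vector field `(η₁, η₂)` on the affine plane.
-- It is tangent to the lines of the arrangement, so it vanishes where two of them cross.
lemma eval_eq_zero_of_mem_affineMultiplePoints {g η₁ η₂ : MvPolynomial (Fin 3) F}
    (h : applyDer ((fun j => g * X j) + ![0, η₁, η₂]) (Qpoly (parallelClasses S)) = 0)
    (hp : p ∈ affineMultiplePoints S) :
    eval (planePoint 1 p) η₁ = 0 ∧ eval (planePoint 1 p) η₂ = 0 := by
  have htangent : ∀ d ∈ classesThrough S p,
      height d (eval (planePoint 1 p) η₁, eval (planePoint 1 p) η₂) = 0 := by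
    intro d hd
    have hv : eval (planePoint 1 p) (levelLine d (height d p)) = 0 := by
      rw [eval_levelLine_planePoint, mul_one, sub_self]
    have hzero := eval_applyDer_eq_zero (isArrangement_parallelClasses S)
      (levelLine_mem_parallelClasses.2 (mem_classesThrough.1 hd)) (h ▸ dvd_zero _) hv
    rw [applyDer_levelLine, map_sub, map_height, map_mul, eval_C] at hzero
    have hsplit : (eval (planePoint 1 p) η₁, eval (planePoint 1 p) η₂) =
        (eval (planePoint 1 p) (g * X 1 + η₁), eval (planePoint 1 p) (g * X 2 + η₂)) -
          eval (planePoint 1 p) g • p := by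
      ext <;> simp [planePoint]
    rw [hsplit, map_sub, map_smul, smul_eq_mul, ← hzero]
    simp [planePoint, mul_comm]
  obtain ⟨d, hd, e, he, hde⟩ := Finset.one_lt_card.1 (mem_affineMultiplePoints.1 hp)
  refine Prod.mk_eq_zero.1 ((bijective_height_prodMk hde).injective ?_)
  simp only [htangent d hd, htangent e he, map_zero]

end ParallelClasses

section Counting

variable {n k : ℕ}

lemma card_filter_add_eq_add {j : ℕ} (hj : j < n) :
    ((Finset.range n ×ˢ Finset.range n).filter fun q => q.1 + q.2 = n + j).card + (j + 1) =
      n := by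
  have himage : (Finset.range n ×ˢ Finset.range n).filter (fun q => q.1 + q.2 = n + j) =
      (Finset.Ico (j + 1) n).image fun t => (t, n + j - t) := by
    ext ⟨t, s⟩
    simp only [Finset.mem_filter, Finset.mem_product, Finset.mem_range, Finset.mem_image,
      Finset.mem_Ico, Prod.mk.injEq]
    exact ⟨fun h => ⟨t, by omega, rfl, by omega⟩, by rintro ⟨_, h, rfl, rfl⟩; omega⟩
  rw [himage, Finset.card_image_of_injective _ fun _ _ h => congrArg Prod.fst h, Nat.card_Ico]
  omega

lemma card_filter_add_mem_Ico_add_choose (hkn : k ≤ n) :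
    ((Finset.range n ×ˢ Finset.range n).filter fun q => q.1 + q.2 ∈ Finset.Ico n (n + k)).card +
      (k + 1).choose 2 = n * k := by
  induction k with
  | zero => simp
  | succ k ih =>
    have hdisj : Disjoint
        ((Finset.range n ×ˢ Finset.range n).filter fun q => q.1 + q.2 ∈ Finset.Ico n (n + k))
        ((Finset.range n ×ˢ Finset.range n).filter fun q => q.1 + q.2 = n + k) :=
      Finset.disjoint_filter.2 fun q _ hq => by rw [Finset.mem_Ico] at hq; omega
    have hsplit : ∀ t, t ∈ Finset.Ico n (n + (k + 1)) ↔ t ∈ Finset.Ico n (n + k) ∨ t = n + k := by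
      simp only [Finset.mem_Ico]
      omega
    have hchoose : (k + 1 + 1).choose 2 = k + 1 + (k + 1).choose 2 := by
      rw [Nat.choose_succ_succ' (k + 1) 1, Nat.choose_one_right]
    simp only [hsplit, Finset.filter_or]
    rw [Finset.card_union_of_disjoint hdisj, hchoose, mul_add_one, ← ih (by omega)]
    have := card_filter_add_eq_add (n := n) (j := k) (by omega)
    omega

end Counting

section Lattice

variable {F : Type*} [Field F] [CharZero F] {n k : ℕ}

/-- Levels for `n` lines in each of the two coordinate classes and `k` lines in the diagonal class.
They are placed so that, for `k ≤ n`, every lattice point `(t, s)` of the triangle `t + s < n + k`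
is on lines of two classes. -/
def latticeLevels (F : Type*) [Field F] [CharZero F] (n k : ℕ) (d : Fin 3) : Finset F :=
  (![Finset.range n, Finset.range n, Finset.Ico n (n + k)] d).map Nat.castEmbedding

lemma card_latticeLevels (d : Fin 3) : (latticeLevels F n k d).card = ![n, n, k] d := by
  fin_cases d <;> simp [latticeLevels]

lemma natCast_mem_latticeLevels {d : Fin 3} {t : ℕ} :
    (t : F) ∈ latticeLevels F n k d ↔
      t ∈ ![Finset.range n, Finset.range n, Finset.Ico n (n + k)] d :=
  Finset.mem_map' Nat.castEmbedding

lemma card_parallelClasses_latticeLevels :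
    (parallelClasses (latticeLevels F n k)).card = 2 * n + 1 + k := by
  simp only [card_parallelClasses, card_latticeLevels, Fin.sum_univ_three, Matrix.cons_val]
  ring

lemma natCast_mem_affineMultiplePoints (hkn : k ≤ n) {t s : ℕ} (hts : t + s < n + k) :
    ((t : F), (s : F)) ∈ affineMultiplePoints (latticeLevels F n k) := by
  have hvert : height 0 ((t : F), (s : F)) ∈ latticeLevels F n k 0 ↔ t < n :=
    natCast_mem_latticeLevels.trans Finset.mem_range
  have hhor : height 1 ((t : F), (s : F)) ∈ latticeLevels F n k 1 ↔ s < n :=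
    natCast_mem_latticeLevels.trans Finset.mem_range
  have hdiag : height 2 ((t : F), (s : F)) ∈ latticeLevels F n k 2 ↔ n ≤ t + s := by
    have hcast : height 2 ((t : F), (s : F)) = ((t + s : ℕ) : F) := (Nat.cast_add t s).symm
    rw [hcast, natCast_mem_latticeLevels]
    exact Finset.mem_Ico.trans (and_iff_left hts)
  rw [mem_affineMultiplePoints, Nat.succ_le_iff, Finset.one_lt_card]
  simp only [mem_classesThrough]
  by_cases ht : t < n
  · by_cases hs : s < n
    · exact ⟨0, hvert.2 ht, 1, hhor.2 hs, by decide⟩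
    · exact ⟨0, hvert.2 ht, 2, hdiag.2 (by omega), by decide⟩
  · exact ⟨1, hhor.2 (by omega), 2, hdiag.2 (by omega), by decide⟩

lemma eq_zero_of_eval_eq_zero_of_mem_affineMultiplePoints (hkn : k ≤ n) {m : ℕ} (hm : m < n + k)
    {f : MvPolynomial (Fin 3) F} (hf : f.IsHomogeneous m)
    (h : ∀ p ∈ affineMultiplePoints (latticeLevels F n k), eval (planePoint 1 p) f = 0) :
    f = 0 := by
  refine eq_zero_of_eval_cons_one_natCast_eq_zero hf fun a ha => ?_
  rw [Fin.sum_univ_two] at ha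
  have hpoint : (Fin.cons 1 fun i => (a i : F)) = planePoint 1 ((a 0 : F), (a 1 : F)) := by
    ext i; fin_cases i <;> rfl
  rw [hpoint]
  exact h _ (natCast_mem_affineMultiplePoints hkn (ha.trans_lt hm))

theorem mdr_parallelClasses_latticeLevels (hkn : k ≤ n) :
    mdr (parallelClasses (latticeLevels F n k)) = n + k := by
  have hA := isArrangement_parallelClasses (latticeLevels F n k)
  refine IsLeast.csInf_eq ⟨?_, fun m ⟨θ, hθ0, hθ, h⟩ => ?_⟩
  · have hcard : (formsThrough (parallelClasses (latticeLevels F n k))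
        (planePoint 0 (direction F 0))).card = n + 1 := by
      rw [card_formsThrough_direction, card_latticeLevels]
      rfl
    have hdeg : 2 * n + 1 + k - (n + 1) = n + k := by omega
    rw [← hdeg, ← hcard, ← card_parallelClasses_latticeLevels (F := F)]
    exact exists_jacobianRelation_of_formsThrough_nonempty hA (multiplePointCoords_ne_zero (.inl 0))
      (Finset.card_pos.1 (hcard ▸ Nat.succ_pos n))
  · by_contra! hlt
    obtain ⟨g, η₁, η₂, h₁, h₂, rfl⟩ := exists_eq_mul_X_add_of_applyDer_Qpoly_eq_zero hθ h
    obtain rfl := eq_zero_of_eval_eq_zero_of_mem_affineMultiplePoints hkn hlt h₁ fun _ hp =>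
      (eval_eq_zero_of_mem_affineMultiplePoints h hp).1
    obtain rfl := eq_zero_of_eval_eq_zero_of_mem_affineMultiplePoints hkn hlt h₂ fun _ hp =>
      (eval_eq_zero_of_mem_affineMultiplePoints h hp).2
    have hzero : (![0, 0, 0] : Fin 3 → MvPolynomial (Fin 3) F) = 0 := by simp
    rw [hzero, add_zero] at h hθ0
    have hg := eq_zero_of_applyDer_mul_X_eq_zero hA ⟨_, X_zero_mem_parallelClasses _⟩ h
    exact hθ0 (funext fun j => by rw [hg, zero_mul, Pi.zero_apply])

lemma card_filter_add_mem_latticeLevels :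
    ((latticeLevels F n k 0 ×ˢ latticeLevels F n k 1).filter fun q =>
      q.1 + q.2 ∈ latticeLevels F n k 2).card =
    ((Finset.range n ×ˢ Finset.range n).filter fun q =>
      q.1 + q.2 ∈ Finset.Ico n (n + k)).card := by
  have hmap : latticeLevels F n k 0 ×ˢ latticeLevels F n k 1 =
      (Finset.range n ×ˢ Finset.range n).map (Nat.castEmbedding.prodMap Nat.castEmbedding) :=
    (Finset.prodMap_map_product _ _ _ _).symm
  rw [hmap, Finset.filter_map, Finset.card_map]
  refine congrArg Finset.card (Finset.filter_congr fun q _ => ?_)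
  have hmem : ((q.1 : F) + q.2) ∈ latticeLevels F n k 2 ↔ q.1 + q.2 ∈ Finset.Ico n (n + k) := by
    rw [← Nat.cast_add, natCast_mem_latticeLevels]
    rfl
  exact hmem

theorem tjurina_parallelClasses_latticeLevels (hkn : k ≤ n) :
    tjurina (parallelClasses (latticeLevels F n k)) + (k + 1).choose 2 =
      3 * n ^ 2 + 3 * (n * k) + k ^ 2 := by
  rw [tjurina_parallelClasses, card_filter_add_mem_latticeLevels, add_assoc, add_assoc,
    card_filter_add_mem_Ico_add_choose hkn]
  simp only [card_latticeLevels, Fin.sum_univ_three, Matrix.cons_val]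
  ring

theorem isMaxTjurina_parallelClasses_latticeLevels (hk : 0 < k) (hkn : k ≤ n) :
    IsMaxTjurina (parallelClasses (latticeLevels F n k)) (2 * n + 1 + k) (n + k) := by
  refine ⟨card_parallelClasses_latticeLevels, mdr_parallelClasses_latticeLevels hkn, ?_⟩
  have hd : 2 * n + 1 + k - 1 = 2 * n + k := by omega
  have hdr : 2 * n + 1 + k - (n + k) - 1 = n := by omega
  have hchoose : 2 * (n + k) - (2 * n + 1 + k) + 2 = k + 1 := by omega
  rw [tauMax, hd, hdr, hchoose]
  refine Nat.eq_sub_of_add_eq ?_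
  rw [tjurina_parallelClasses_latticeLevels hkn]
  ring

end Lattice

theorem exists_maxTjurina_real_general (F : Type*) [Field F] [CharZero F] (d r : ℕ) (hd : 0 < d)
    (h1 : d ≤ 2 * r) (h2 : 3 * r ≤ 2 * (d - 1)) :
    ∃ A : Finset (MvPolynomial (Fin 3) F),
      IsArrangement A ∧ IsEssential A ∧ IsMaxTjurina A d r := by
  obtain ⟨n, k, rfl, rfl, hk, hkn⟩ : ∃ n k : ℕ, d = 2 * n + 1 + k ∧ r = n + k ∧ 0 < k ∧ k ≤ n :=
    ⟨d - r - 1, 2 * r + 1 - d, by omega, by omega, by omega, by omega⟩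
  have hlevel : ∀ i : Fin 3, 0 < ![n, n, k] i → (latticeLevels F n k i).Nonempty := fun i hi =>
    Finset.card_pos.1 (card_latticeLevels (F := F) i ▸ hi)
  exact ⟨parallelClasses (latticeLevels F n k), isArrangement_parallelClasses _,
    isEssential_parallelClasses zero_ne_one (hlevel 0 (hk.trans_le hkn))
      (hlevel 1 (hk.trans_le hkn)),
    isMaxTjurina_parallelClasses_latticeLevels hk hkn⟩

/-- For every pair of integers `(d, r)` with `d ≥ 4` and
`d/2 ≤ r ≤ 2(d−1)/3` (i.e. `2r ≥ d` and `3r ≤ 2(d−1)`), there exists a line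
arrangement `A` of `d` lines in the real projective plane which is maximal Tjurina of
type `(d, r)`. -/
theorem exists_maxTjurina_real (d r : ℕ) (hd : 4 ≤ d)
    (h1 : d ≤ 2 * r) (h2 : 3 * r ≤ 2 * (d - 1)) :
    ∃ A : Finset (MvPolynomial (Fin 3) ℝ),
      IsArrangement A ∧ IsEssential A ∧ IsMaxTjurina A d r :=
  exists_maxTjurina_real_general ℝ d r (by omega) h1 h2
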